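/- For all nonnegative integers p, q, the polynomial N_{pq}(t) satisfies N_{pq}(t) = Σ_{k=1}^{min(p,q)} S⊖(k, p−k | k, q−k) · t^k; equivalently, for every k ≥ 1 the coefficient of t^k in N_{pq}(t) equals S⊖(k, p−k | k, q−k) when 1 ≤ k ≤ min(p,q) and equals 0 otherwise, and the coefficient of t^0 is 0. (Theorem 3.1, the main combinatorial interpretation.) -/

import Mathlib

open Finset

open scoped Classical in
/-- `Par a b` is the set of Young diagrams (lower sets of boxes) fitting inside an
`a × b` rectangle, encoded as finsets of cells `(i, j)` with `i < a` and `j < b`. -/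
noncomputable def Par (a b : ℕ) : Finset (Finset (ℕ × ℕ)) :=
  ((Finset.range a ×ˢ Finset.range b).powerset).filter
    (fun S => IsLowerSet (S : Set (ℕ × ℕ)))

/-- `Sdiff a b c d` is the sum of `|λ ⊖ μ|` over all `λ ∈ Par(a×b)` and `μ ∈ Par(c×d)`. -/
noncomputable def Sdiff (a b c d : ℕ) : ℕ :=
  ∑ l ∈ Par a b, ∑ m ∈ Par c d, (symmDiff l m).card

/-- The polynomial `W_{pq}(t) = Σ_{k=0}^{min(p,q)-1} C(p-1,k) C(q-1,k) t^k`. -/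
noncomputable def W (p q : ℕ) : Polynomial ℤ :=
  ∑ k ∈ Finset.range (min p q),
    Polynomial.C (((p - 1).choose k : ℤ) * ((q - 1).choose k : ℤ)) * Polynomial.X ^ k

/-- Prepend a full row of length `b`. -/
def addrow (b : ℕ) (l : Finset (ℕ × ℕ)) : Finset (ℕ × ℕ) :=
  l.image (fun x => (x.1 + 1, x.2)) ∪ (Finset.range b).image (fun j => (0, j))

lemma mem_addrow (b : ℕ) (l : Finset (ℕ × ℕ)) (i j : ℕ) :
    (i, j) ∈ addrow b l ↔ (i = 0 ∧ j < b) ∨ (∃ i', i = i' + 1 ∧ (i', j) ∈ l) := by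
  simp only [addrow, mem_union, mem_image, Prod.exists, Prod.mk.injEq, mem_range]
  constructor
  · rintro (⟨a, c, h, rfl, rfl⟩ | ⟨a, h, rfl, rfl⟩)
    · exact Or.inr ⟨a, rfl, h⟩
    · exact Or.inl ⟨rfl, h⟩
  · rintro (⟨rfl, h⟩ | ⟨a, rfl, h⟩)
    · exact Or.inr ⟨j, h, rfl, rfl⟩
    · exact Or.inl ⟨a, j, h, rfl, rfl⟩

lemma mem_addrow_zero (b : ℕ) (l : Finset (ℕ × ℕ)) (j : ℕ) :
    (0, j) ∈ addrow b l ↔ j < b := by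
  rw [mem_addrow]; simp

lemma mem_addrow_succ (b : ℕ) (l : Finset (ℕ × ℕ)) (i j : ℕ) :
    (i + 1, j) ∈ addrow b l ↔ (i, j) ∈ l := by
  rw [mem_addrow]; simp

lemma addrow_injective (b : ℕ) : Function.Injective (addrow b) := by
  intro l m h
  ext ⟨i, j⟩
  rw [← mem_addrow_succ b l, ← mem_addrow_succ b m, h]

lemma mem_Par (a b : ℕ) (S : Finset (ℕ × ℕ)) :
    S ∈ Par a b ↔ (∀ i j, (i, j) ∈ S → i < a ∧ j < b) ∧
      (∀ i j i' j', i' ≤ i → j' ≤ j → (i, j) ∈ S → (i', j') ∈ S) := by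
  classical
  simp only [Par, mem_filter, mem_powerset]
  constructor
  · rintro ⟨h1, h2⟩
    refine ⟨fun i j h => by simpa using h1 h, fun i j i' j' hi hj h => ?_⟩
    have : (i', j') ≤ (i, j) := ⟨hi, hj⟩
    exact h2 this h
  · rintro ⟨h1, h2⟩
    refine ⟨fun x hx => by simpa using h1 x.1 x.2 hx, fun x y hxy hx => ?_⟩
    exact h2 x.1 x.2 y.1 y.2 hxy.1 hxy.2 hx

lemma mem_image_addrow (a b : ℕ) (S : Finset (ℕ × ℕ)) :
    S ∈ (Par a b).image (addrow b) ↔ S ∈ Par (a + 1) b ∧ ∀ j < b, (0, j) ∈ S := by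
  rw [mem_image]
  constructor
  · rintro ⟨l, hl, rfl⟩
    rw [mem_Par] at hl
    obtain ⟨h1, h2⟩ := hl
    refine ⟨(mem_Par _ _ _).2 ⟨?_, ?_⟩, fun j hj => (mem_addrow_zero _ _ _).2 hj⟩
    · rintro (_ | i) j h
      · rw [mem_addrow_zero] at h; omega
      · rw [mem_addrow_succ] at h
        have := h1 _ _ h; omega
    · rintro (_ | i) j (_ | i') j' hi hj h
      · rw [mem_addrow_zero] at h ⊢; omega
      · omega
      · rw [mem_addrow_succ] at h
        rw [mem_addrow_zero]
        have := h1 _ _ h; omega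
      · rw [mem_addrow_succ] at h ⊢
        exact h2 i j i' j' (by omega) hj h
  · rintro ⟨hS, h0⟩
    rw [mem_Par] at hS
    obtain ⟨h1, h2⟩ := hS
    have key : ∀ i j, (i, j) ∈ (Finset.range a ×ˢ Finset.range b).filter
        (fun x => (x.1 + 1, x.2) ∈ S) ↔ (i + 1, j) ∈ S := by
      intro i j
      simp only [mem_filter, mem_product, mem_range]
      constructor
      · exact fun h => h.2
      · intro h
        have := h1 _ _ h
        exact ⟨by omega, h⟩
    refine ⟨(Finset.range a ×ˢ Finset.range b).filter (fun x => (x.1 + 1, x.2) ∈ S),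
      (mem_Par _ _ _).2 ⟨?_, ?_⟩, ?_⟩
    · intro i j h
      rw [key] at h
      have := h1 _ _ h; omega
    · intro i j i' j' hi hj h
      rw [key] at h ⊢
      exact h2 _ _ _ _ (by omega) hj h
    · ext ⟨i, j⟩
      rcases i with _ | i
      · rw [mem_addrow_zero]
        exact ⟨fun h => h0 j h, fun h => (h1 _ _ h).2⟩
      · rw [mem_addrow_succ, key]

/-- Diagrams indexed by number of rows `k` and semiperimeter `p`. -/
noncomputable def PP (k p : ℕ) : Finset (Finset (ℕ × ℕ)) :=
  if k ≤ p then Par k (p - k) else ∅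

lemma PP_succ (k p : ℕ) :
    PP (k + 1) (p + 1) = PP (k + 1) p ∪ (PP k p).image (addrow (p - k)) := by
  unfold PP
  rcases lt_trichotomy k p with h | h | h
  · obtain ⟨b, rfl⟩ : ∃ b, p = k + b + 1 := ⟨p - k - 1, by omega⟩
    rw [if_pos (by omega), if_pos (by omega), if_pos (by omega)]
    have e1 : k + b + 1 + 1 - (k + 1) = b + 1 := by omega
    have e2 : k + b + 1 - (k + 1) = b := by omega
    have e3 : k + b + 1 - k = b + 1 := by omega
    rw [e1, e2, e3]
    ext S
    rw [mem_union, mem_image_addrow, mem_Par, mem_Par]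
    constructor
    · rintro ⟨h1, h2⟩
      by_cases hb : (0, b) ∈ S
      · exact Or.inr ⟨⟨h1, h2⟩, fun j hj => h2 0 b 0 j le_rfl (by omega) hb⟩
      · refine Or.inl ⟨fun i j hij => ?_, h2⟩
        have := h1 _ _ hij
        refine ⟨this.1, ?_⟩
        by_contra hc
        exact hb (h2 i j 0 b (by omega) (by omega) hij)
    · rintro (⟨h1, h2⟩ | ⟨h, _⟩)
      · refine ⟨fun i j hij => ?_, h2⟩
        have := h1 _ _ hij
        omega
      · exact h
  · subst h
    rw [if_pos (by omega), if_neg (by omega), if_pos (by omega)]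
    ext S
    rw [empty_union, Nat.sub_self, Nat.sub_self, mem_image_addrow]
    simp
  · rw [if_neg (by omega), if_neg (by omega), if_neg (by omega)]
    simp

lemma PP_disj (k p : ℕ) :
    Disjoint (PP (k + 1) p) ((PP k p).image (addrow (p - k))) := by
  rw [Finset.disjoint_left]
  intro S h1 h2
  rw [mem_image] at h2
  obtain ⟨l, _, rfl⟩ := h2
  unfold PP at h1
  split_ifs at h1 with h
  · rw [mem_Par] at h1
    have := h1.1 0 (p - (k + 1)) ((mem_addrow_zero _ _ _).2 (by omega))
    omega
  · simp at h1

lemma PP_zero (p : ℕ) : PP 0 p = {∅} := by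
  unfold PP
  rw [if_pos (by omega)]
  ext S
  rw [mem_Par, mem_singleton]
  constructor
  · rintro ⟨h, _⟩
    rw [Finset.eq_empty_iff_forall_notMem]
    rintro ⟨i, j⟩ hij
    have := h _ _ hij
    omega
  · rintro rfl
    simp

lemma PP_succ_zero (k : ℕ) : PP (k + 1) 0 = ∅ := by
  unfold PP
  rw [if_neg (by omega)]

lemma sum_PP_succ (k p : ℕ) (f : Finset (ℕ × ℕ) → ℤ) :
    ∑ l ∈ PP (k + 1) (p + 1), f l
      = ∑ l ∈ PP (k + 1) p, f l + ∑ l ∈ PP k p, f (addrow (p - k) l) := by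
  rw [PP_succ, sum_union (PP_disj k p), sum_image (fun _ _ _ _ h => addrow_injective _ h)]

lemma card_PP (p k : ℕ) : ((PP k p).card : ℤ) = (p.choose k : ℤ) := by
  induction p generalizing k with
  | zero =>
    rcases k with _ | k
    · simp [PP_zero]
    · simp [PP_succ_zero]
  | succ p ih =>
    rcases k with _ | k
    · simp [PP_zero]
    · have := sum_PP_succ k p (fun _ => 1)
      simp only [sum_const, nsmul_eq_mul, mul_one] at this
      rw [this, ih, ih, Nat.choose_succ_succ]
      push_cast
      ring

lemma card_addrow (b : ℕ) (l : Finset (ℕ × ℕ)) : (addrow b l).card = l.card + b := by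
  unfold addrow
  rw [card_union_of_disjoint, card_image_of_injective, card_image_of_injective, card_range]
  · intro x y h; simpa using h
  · rintro ⟨i, j⟩ ⟨i', j'⟩ h; simpa using h
  · rw [Finset.disjoint_left]
    rintro ⟨i, j⟩ h h'
    simp only [mem_image, Prod.mk.injEq] at h h'
    obtain ⟨_, _, h, _⟩ := h
    obtain ⟨_, _, h', _⟩ := h'
    omega

lemma card_symmDiff_eq (l m : Finset (ℕ × ℕ)) :
    ((symmDiff l m).card : ℤ) = l.card + m.card - 2 * (l ∩ m).card := by
  have h1 : (symmDiff l m).card = (l \ m).card + (m \ l).card := by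
    rw [symmDiff_def, sup_eq_union, card_union_of_disjoint disjoint_sdiff_sdiff]
  have h2 := card_sdiff_add_card_inter l m
  have h3 := card_sdiff_add_card_inter m l
  rw [inter_comm m l] at h3
  omega

lemma addrow_inter (b c : ℕ) (l m : Finset (ℕ × ℕ)) :
    addrow b l ∩ addrow c m = addrow (min b c) (l ∩ m) := by
  ext ⟨i, j⟩
  rcases i with _ | i
  · simp only [mem_inter, mem_addrow_zero]; omega
  · simp only [mem_inter, mem_addrow_succ]

lemma card_symmDiff_addrow (b c : ℕ) (l m : Finset (ℕ × ℕ)) :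
    ((symmDiff (addrow b l) (addrow c m)).card : ℤ)
      = (symmDiff l m).card + |(b : ℤ) - c| := by
  rw [card_symmDiff_eq, card_symmDiff_eq, addrow_inter, card_addrow, card_addrow, card_addrow]
  push_cast
  rcases le_total (b : ℤ) c with h | h
  · rw [min_eq_left h, abs_of_nonpos (by omega)]; ring
  · rw [min_eq_right h, abs_of_nonneg (by omega)]; ring

/-- The coefficient. -/
noncomputable def FF (k p q : ℕ) : ℤ :=
  ∑ l ∈ PP k p, ∑ m ∈ PP k q, ((symmDiff l m).card : ℤ)

lemma FF_zero (p q : ℕ) : FF 0 p q = 0 := by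
  simp [FF, PP_zero]

lemma FF_zero_left (k q : ℕ) : FF k 0 q = 0 := by
  rcases k with _ | k
  · exact FF_zero _ _
  · simp [FF, PP_succ_zero]

lemma FF_zero_right (k p : ℕ) : FF k p 0 = 0 := by
  rcases k with _ | k
  · exact FF_zero _ _
  · simp [FF, PP_succ_zero]

lemma FF_corner (k p q : ℕ) :
    ∑ l ∈ PP k p, ∑ m ∈ PP k q,
      ((symmDiff (addrow (p - k) l) (addrow (q - k) m)).card : ℤ)
      = FF k p q + |(p : ℤ) - q| * (p.choose k * q.choose k) := by
  simp only [card_symmDiff_addrow, sum_add_distrib, sum_const, nsmul_eq_mul, card_PP]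
  unfold FF
  congr 1
  by_cases hp : k ≤ p
  · by_cases hq : k ≤ q
    · push_cast [hp, hq]
      rw [sub_sub_sub_cancel_right]
      ring
    · simp [Nat.choose_eq_zero_of_lt (not_le.1 hq)]
  · simp [Nat.choose_eq_zero_of_lt (not_le.1 hp)]

lemma FF_succ (k p q : ℕ) :
    FF (k + 1) (p + 1) (q + 1) = FF (k + 1) p (q + 1) + FF (k + 1) (p + 1) q
      - FF (k + 1) p q + FF k p q + |(p : ℤ) - q| * (p.choose k * q.choose k) := by
  have h := FF_corner k p q
  have e1 : FF (k + 1) (p + 1) (q + 1) = FF (k + 1) p (q + 1)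
      + ∑ l ∈ PP k p, ∑ m ∈ PP (k + 1) (q + 1), ((symmDiff (addrow (p - k) l) m).card : ℤ) := by
    unfold FF; rw [sum_PP_succ]
  have e2 : FF (k + 1) (p + 1) q = FF (k + 1) p q
      + ∑ l ∈ PP k p, ∑ m ∈ PP (k + 1) q, ((symmDiff (addrow (p - k) l) m).card : ℤ) := by
    unfold FF; rw [sum_PP_succ]
  simp only [sum_PP_succ, sum_add_distrib] at e1
  rw [e1, e2, h]
  ring

lemma coeff_W (p q n : ℕ) :
    (W (p + 1) (q + 1)).coeff n = (p.choose n : ℤ) * (q.choose n : ℤ) := by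
  unfold W
  simp only [Polynomial.finset_sum_coeff, Polynomial.coeff_C_mul_X_pow, Nat.add_sub_cancel]
  rw [Finset.sum_ite_eq]
  split_ifs with h
  · rfl
  · rw [mem_range, not_lt, min_le_iff] at h
    rcases h with h | h
    · rw [Nat.choose_eq_zero_of_lt (show p < n by omega)]; simp
    · rw [Nat.choose_eq_zero_of_lt (show q < n by omega)]; simp

lemma FF_eq (k p q : ℕ) (hp : k ≤ p) (hq : k ≤ q) :
    FF k p q = (Sdiff k (p - k) k (q - k) : ℤ) := by
  unfold FF Sdiff PP
  rw [if_pos hp, if_pos hq]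
  push_cast
  rfl

lemma FF_eq_zero (k p q : ℕ) (h : ¬ (k ≤ p ∧ k ≤ q)) : FF k p q = 0 := by
  unfold FF PP
  by_cases hp : k ≤ p
  · rw [if_neg (show ¬ k ≤ q from fun hq => h ⟨hp, hq⟩)]; simp
  · rw [if_neg hp]; simp

/-- Theorem 3.1: if `N` satisfies the defining recursion and initial values of the
polynomials `N_{pq}(t)`, then `N_{pq}(t) = Σ_{k=1}^{min(p,q)} S⊖(k, p-k | k, q-k) t^k`. -/
theorem Npq_eq_sum_sdiff (N : ℕ → ℕ → Polynomial ℤ)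
    (h0q : ∀ q, N 0 q = 0) (hp0 : ∀ p, N p 0 = 0) (h11 : N 1 1 = 0)
    (hrec : ∀ p q : ℕ, 1 ≤ p → 1 ≤ q → ¬(p = 1 ∧ q = 1) →
      N p q = N (p - 1) q + N p (q - 1) - (1 - Polynomial.X) * N (p - 1) (q - 1)
        + Polynomial.C (|(p : ℤ) - (q : ℤ)|) * Polynomial.X * W p q) :
    ∀ p q : ℕ,
      N p q = ∑ k ∈ Finset.Icc 1 (min p q),
        Polynomial.C ((Sdiff k (p - k) k (q - k) : ℤ)) * Polynomial.X ^ k := by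
  have hrec' : ∀ p q : ℕ, N (p + 1) (q + 1) = N p (q + 1) + N (p + 1) q
      - (1 - Polynomial.X) * N p q
        + Polynomial.C (|(p : ℤ) - (q : ℤ)|) * Polynomial.X * W (p + 1) (q + 1) := by
    intro p q
    by_cases h : p = 0 ∧ q = 0
    · obtain ⟨rfl, rfl⟩ := h
      simp [h0q, hp0, h11]
    · have := hrec (p + 1) (q + 1) (by omega) (by omega) (by omega)
      simpa using this
  have main : ∀ p q n : ℕ, (N p q).coeff n = FF n p q := by
    intro p
    induction p with
    | zero => intro q n; rw [h0q, FF_zero_left]; simp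
    | succ p ihp =>
      intro q
      induction q with
      | zero => intro n; rw [hp0, FF_zero_right]; simp
      | succ q ihq =>
        intro n
        rw [hrec', mul_assoc, sub_mul, one_mul]
        rcases n with _ | n
        · simp [ihp, ihq, FF_zero]
        · rw [Polynomial.coeff_add, Polynomial.coeff_sub, Polynomial.coeff_add,
            Polynomial.coeff_sub, Polynomial.coeff_C_mul, Polynomial.coeff_X_mul,
            Polynomial.coeff_X_mul, coeff_W, ihp, ihp, ihp, ihq, FF_succ]
          ring
  intro p q
  ext n
  rw [main]
  simp only [Polynomial.finset_sum_coeff, Polynomial.coeff_C_mul_X_pow]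
  rw [Finset.sum_ite_eq]
  split_ifs with h
  · rw [mem_Icc, le_min_iff] at h
    exact FF_eq n p q h.2.1 h.2.2
  · rw [mem_Icc, le_min_iff] at h
    rcases n with _ | n
    · exact FF_zero p q
    · exact FF_eq_zero _ _ _ (fun h' => h ⟨by omega, h'⟩)
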